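/- arXiv:2204.11285 — 2 statements merged into one kernel-verified Lean document; each statement's English description precedes it below -/
import Mathlib

section
/- (Correctness of symmetry pruning.) Let d = ((t_1,y_1),…,(t_ℓ,y_ℓ)) be a rule list whose last term is the constant-true term, and let 1 ≤ i < j ≤ ℓ be such that the consecutive rules r_i, r_{i+1}, …, r_j all have the same label, i.e., y_i = y_{i+1} = … = y_j. Then for any permutation σ of the index set {i,…,j}, the rule list d' obtained from d by replacing the block (r_i,…,r_j) with (r_{σ(i)},…,r_{σ(j)}) satisfies h_{d'}(x) = h_d(x) for every input x ∈ X. -/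
/-- Input domain `X = {0,1}^J`. -/
abbrev Input (J : ℕ) := Fin J → Bool

/-- A term over `X = {0,1}^J` is a function `t : X → {0,1}`. -/
abbrev Term (J : ℕ) := Input J → Bool

/-- A rule is a pair `(t, y)` of a term and a label. -/
abbrev Rule (J : ℕ) := Term J × Bool

/-- The classifier `h_d` of a rule list `d`: it predicts `y_i` for the least
index `i` with `t_i(x) = 1`. -/
def predict {J : ℕ} : List (Rule J) → Input J → Bool
  | [], _ => false
  | (t, y) :: rest, x => if t x then y else predict rest x

theorem predict_append_left {J : ℕ} (a l l' : List (Rule J)) (x : Input J)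
    (h : predict l x = predict l' x) : predict (a ++ l) x = predict (a ++ l') x := by
  induction a with
  | nil => simpa using h
  | cons r a ih =>
    obtain ⟨t, z⟩ := r
    simp [predict, ih]

theorem predict_block {J : ℕ} (b c : List (Rule J)) (y : Bool)
    (hy : ∀ r ∈ b, r.2 = y) (x : Input J) :
    predict (b ++ c) x = if b.any (fun r => r.1 x) then y else predict c x := by
  induction b with
  | nil => simp
  | cons r b ih =>
    obtain ⟨t, z⟩ := r
    have hz : z = y := hy (t, z) (by simp)
    have ih' := ih (fun r hr => hy r (by simp [hr]))
    subst hz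
    simp only [List.cons_append, predict, ih', List.any_cons]
    by_cases h : t x = true <;> simp [h]

/-- correctness of symmetry pruning: if a block `b` of
consecutive rules of a rule list `d = a ++ b ++ c` (of block length ≥ 2,
corresponding to indices `i < j`) all carry the same label `y`, then
permuting the block by any permutation `σ` does not change the classifier:
`h_{d'}(x) = h_d(x)` for every input `x`. -/
theorem symmetry_pruning_correct {J : ℕ} (a b c : List (Rule J)) (y : Bool)
    (hblock : 2 ≤ b.length)
    (hy : ∀ r ∈ b, r.2 = y)
    (hne : a ++ b ++ c ≠ [])
    (hlast : ((a ++ b ++ c).getLast hne).1 = fun _ => true)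
    (σ : Equiv.Perm (Fin b.length)) :
    ∀ x : Input J,
      predict (a ++ (List.ofFn fun k => b.get (σ k)) ++ c) x
        = predict (a ++ b ++ c) x := by
  intro x
  have hmem : ∀ r, r ∈ (List.ofFn fun k => b.get (σ k)) ↔ r ∈ b := by
    intro r
    rw [List.mem_ofFn', List.mem_iff_get]
    constructor
    · rintro ⟨k, hk⟩
      exact ⟨σ k, hk⟩
    · rintro ⟨k, hk⟩
      exact ⟨σ.symm k, by simpa using hk⟩
  rw [List.append_assoc, List.append_assoc]
  apply predict_append_left
  rw [predict_block _ c y (fun r hr => hy r ((hmem r).1 hr)), predict_block b c y hy]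
  have hany : (List.ofFn fun k => b.get (σ k)).any (fun r => r.1 x) = b.any (fun r => r.1 x) := by
    rw [Bool.eq_iff_iff, List.any_eq_true, List.any_eq_true]
    exact exists_congr fun r => and_congr_left fun _ => hmem r
  rw [hany]
end

section
/- (Validity of the CORELS lower bound for pruning.) Let S be a dataset of N examples, let dp = ((t_1,y_1),…,(t_k,y_k)) be a prefix of rules, and define the lower bound LB(dp, S) = (1/N)·Σ_{n : x_n is captured by dp} 1[ŷ(x_n) ≠ y_n], where ŷ(x_n) = y_{i*} for the least index i* ≤ k with t_{i*}(x_n) = 1. Then for every rule list d = dp ∘ d' obtained by extending dp with a suffix d' whose last term is the constant-true term, the empirical risk satisfies L(h_d | S) ≥ LB(dp, S). Consequently, if LB(dp, S) > L* for a threshold L* ∈ [0,1], then no extension d of dp satisfies L(h_d | S) ≤ L*. -/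
/-- `x` is captured by the prefix `dp` if `t_i(x) = 1` for some rule of `dp`. -/
def captured {J : ℕ} (dp : List (Rule J)) (x : Input J) : Bool :=
  dp.any fun r => r.1 x

/-- Empirical risk `L(h | S)` on a dataset of `N` examples (0-1 loss). -/
noncomputable def risk {J N : ℕ} (S : Fin N → Input J × Bool) (h : Input J → Bool) : ℝ :=
  (∑ n, if h (S n).1 ≠ (S n).2 then (1 : ℝ) else 0) / N

/-- The CORELS lower bound `LB(dp, S)`: the fraction of examples that are
captured by the prefix `dp` and misclassified by it (for a captured input,
`predict dp` is exactly the prediction `y_{i*}` of the least firing rule). -/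
noncomputable def LB {J N : ℕ} (S : Fin N → Input J × Bool) (dp : List (Rule J)) : ℝ :=
  (∑ n, if captured dp (S n).1 = true ∧ predict dp (S n).1 ≠ (S n).2
        then (1 : ℝ) else 0) / N

theorem predict_append_of_captured {J : ℕ} (dp d' : List (Rule J)) (x : Input J)
    (h : captured dp x = true) : predict (dp ++ d') x = predict dp x := by
  induction dp with
  | nil => simp [captured] at h
  | cons r rest ih =>
    obtain ⟨t, y⟩ := r
    by_cases ht : t x = true
    · simp [predict, ht]
    · have h' : captured rest x = true := by
        simpa [captured, ht] using h
      simp [predict, ht, ih h']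

theorem LB_le_risk {J N : ℕ} (S : Fin N → Input J × Bool) (dp d' : List (Rule J)) :
    LB S dp ≤ risk S (predict (dp ++ d')) := by
  unfold LB risk
  refine div_le_div_of_nonneg_right (Finset.sum_le_sum fun n _ => ?_) (Nat.cast_nonneg N)
  by_cases hc : captured dp (S n).1 = true ∧ predict dp (S n).1 ≠ (S n).2
  · have h2 : predict (dp ++ d') (S n).1 ≠ (S n).2 := by
      rw [predict_append_of_captured dp d' _ hc.1]
      exact hc.2
    rw [if_pos hc, if_pos h2]
  · rw [if_neg hc]
    split_ifs <;> norm_num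

/-- validity of the CORELS lower bound: every rule list
`d = dp ∘ d'` extending the prefix `dp` by a suffix `d'` whose last term is
the constant-true term satisfies `L(h_d | S) ≥ LB(dp, S)`; consequently if
`LB(dp, S) > L*` for a threshold `L* ∈ [0,1]`, no extension `d` of `dp`
satisfies `L(h_d | S) ≤ L*`. -/
theorem corels_lower_bound_valid {J N : ℕ} (hN : 1 ≤ N)
    (S : Fin N → Input J × Bool) (dp : List (Rule J)) :
    (∀ (d' : List (Rule J)) (hne : d' ≠ []),
        (d'.getLast hne).1 = (fun _ => true) →
        LB S dp ≤ risk S (predict (dp ++ d'))) ∧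
    (∀ Lstar : ℝ, Lstar ∈ Set.Icc (0 : ℝ) 1 → LB S dp > Lstar →
      ∀ (d' : List (Rule J)) (hne : d' ≠ []),
        (d'.getLast hne).1 = (fun _ => true) →
        ¬ risk S (predict (dp ++ d')) ≤ Lstar) := by
  exact ⟨fun d' _ _ => LB_le_risk S dp d',
    fun Lstar _ hL d' _ _ hle => absurd (le_trans (LB_le_risk S dp d') hle) (not_le.mpr hL)⟩
end
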